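/- For every integer k ≥ 3: every y-non-negative k-nice subset of ℤ² of height exactly 2 has at most k+3 elements; if k is even, every such set has at most k+2 elements; and if k is odd, there exists a y-non-negative k-nice set of height 2 with exactly k+3 elements (for example {(1,0), (k,2)} ∪ {(x,1) : 0 ≤ x ≤ k}). -/

import Mathlib

/-- A set `Q ⊆ ℤ²` is `k`-nice if every element is a nonzero coprime pair,
`Q` does not contain both a pair and its negation, and all cross determinants
are bounded by `k` in absolute value. -/
def IsKNice (k : ℕ) (Q : Set (ℤ × ℤ)) : Prop :=
  (∀ p ∈ Q, p ≠ (0, 0) ∧ Int.gcd p.1 p.2 = 1) ∧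
  (∀ p ∈ Q, -p ∉ Q) ∧
  (∀ p ∈ Q, ∀ q ∈ Q, |p.1 * q.2 - q.1 * p.2| ≤ (k : ℤ))

/-- `Q` is y-non-negative: all second coordinates are non-negative. -/
def YNonneg (Q : Set (ℤ × ℤ)) : Prop := ∀ p ∈ Q, 0 ≤ p.2

/-- The height of `Q` is at most `h`. -/
def HeightLe (Q : Set (ℤ × ℤ)) (h : ℕ) : Prop := ∀ p ∈ Q, |p.2| ≤ (h : ℤ)

/-- The height of `Q` is exactly `h`: the maximum of `|n|` over `(m, n) ∈ Q` is `h`. -/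
def HeightEq (Q : Set (ℤ × ℤ)) (h : ℕ) : Prop :=
  HeightLe Q h ∧ ∃ p ∈ Q, |p.2| = (h : ℤ)

/-!
A `k`-nice set meets the row `y = 0` at most once, and the row `y = 2` only at odd abscissae. If
`2 * a + 1` and `2 * b + 1` are the extreme abscissae on the row `y = 2`, then this row has at most
`b - a + 1` points. The determinant bounds against the two extreme points confine the row `y = 1`
to an interval with `a - b + 2 * ((k + 1) / 2)` points. The spread `b - a` cancels in the sum, which
leaves the parity-dependent bound `2 * ((k + 1) / 2) + 2`.
-/

/-- The row of `Q` at height `n`, recorded by its abscissae: the slice of the planar set `Q` by the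
horizontal line `y = n`, as a set of integers. -/
def row (Q : Set (ℤ × ℤ)) (n : ℤ) : Set ℤ := {x | (x, n) ∈ Q}

lemma YNonneg.encard_le_sum_encard_row {Q : Set (ℤ × ℤ)} {h : ℕ} (hy : YNonneg Q)
    (hh : HeightLe Q h) : Q.encard ≤ ∑ n ∈ Finset.range (h + 1), (row Q n).encard := by
  have hcover : Q ⊆ ⋃ n : Fin (h + 1), (fun x : ℤ ↦ (x, (n : ℤ))) '' row Q n := by
    rintro ⟨x, y⟩ hp
    lift y to ℕ using hy _ hp
    have hyh : y ≤ h := by simpa using hh _ hp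
    exact Set.mem_iUnion.2 ⟨⟨y, Nat.lt_succ_of_le hyh⟩, x, hp, rfl⟩
  calc Q.encard
      ≤ ∑ n : Fin (h + 1), ((fun x : ℤ ↦ (x, (n : ℤ))) '' row Q n).encard :=
        (Set.encard_le_encard hcover).trans (Set.encard_iUnion_le_of_fintype _)
    _ ≤ ∑ n : Fin (h + 1), (row Q n).encard :=
        Finset.sum_le_sum fun _ _ ↦ Set.encard_image_le _ _
    _ = ∑ n ∈ Finset.range (h + 1), (row Q n).encard :=
        (Finset.sum_range fun n : ℕ ↦ (row Q n).encard).symm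

lemma YNonneg.row_nonempty_of_heightEq {Q : Set (ℤ × ℤ)} {h : ℕ} (hy : YNonneg Q)
    (hh : HeightEq Q h) : (row Q h).Nonempty := by
  obtain ⟨-, ⟨x, y⟩, hp, hyh⟩ := hh
  rw [abs_of_nonneg (hy _ hp)] at hyh
  exact ⟨x, hyh ▸ hp⟩

lemma encard_Icc_int (a b : ℤ) : (Set.Icc a b).encard = (b + 1 - a).toNat := by
  rw [← Finset.coe_Icc, Set.encard_coe_eq_coe_finsetCard, Int.card_Icc]

namespace IsKNice

variable {k : ℕ} {Q : Set (ℤ × ℤ)}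

lemma isCoprime_of_mem_row (hQ : IsKNice k Q) {x n : ℤ} (hx : x ∈ row Q n) : IsCoprime x n :=
  Int.isCoprime_iff_gcd_eq_one.2 (hQ.1 _ hx).2

lemma abs_det_le (hQ : IsKNice k Q) {x y m n : ℤ} (hx : x ∈ row Q m) (hy : y ∈ row Q n) :
    |x * n - y * m| ≤ k :=
  hQ.2.2 _ hx _ hy

lemma odd_of_mem_row_two (hQ : IsKNice k Q) {x : ℤ} (hx : x ∈ row Q 2) : Odd x :=
  Int.isCoprime_two_right.1 (hQ.isCoprime_of_mem_row hx)

lemma row_zero_subsingleton (hQ : IsKNice k Q) : (row Q 0).Subsingleton := by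
  intro x hx y hy
  have hx_unit : IsUnit x := isCoprime_zero_right.1 (hQ.isCoprime_of_mem_row hx)
  have hy_unit : IsUnit y := isCoprime_zero_right.1 (hQ.isCoprime_of_mem_row hy)
  refine (Int.isUnit_eq_or_eq_neg hx_unit hy_unit).resolve_right fun hxy ↦ hQ.2.1 _ hy ?_
  simpa [row, hxy] using hx

lemma abs_sub_le_of_mem_row (hQ : IsKNice k Q) {n x y : ℤ} (hn : n ≠ 0) (hx : x ∈ row Q n)
    (hy : y ∈ row Q n) : |x - y| ≤ k :=
  calc |x - y| ≤ |x - y| * |n| := le_mul_of_one_le_right (abs_nonneg _) (Int.one_le_abs hn)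
    _ = |x * n - y * n| := by rw [← abs_mul, sub_mul]
    _ ≤ k := hQ.abs_det_le hx hy

lemma exists_isLeast_row (hQ : IsKNice k Q) {n : ℤ} (hn : n ≠ 0) (hne : (row Q n).Nonempty) :
    ∃ a, IsLeast (row Q n) a := by
  obtain ⟨x, hx⟩ := hne
  refine Int.exists_least_of_bdd ⟨x - k, fun y hy ↦ ?_⟩ ⟨x, hx⟩
  linarith [(abs_le.1 (hQ.abs_sub_le_of_mem_row hn hx hy)).2]

lemma exists_isGreatest_row (hQ : IsKNice k Q) {n : ℤ} (hn : n ≠ 0) (hne : (row Q n).Nonempty) :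
    ∃ b, IsGreatest (row Q n) b := by
  obtain ⟨x, hx⟩ := hne
  refine Int.exists_greatest_of_bdd ⟨x + k, fun y hy ↦ ?_⟩ ⟨x, hx⟩
  linarith [(abs_le.1 (hQ.abs_sub_le_of_mem_row hn hx hy)).1]

lemma encard_row_two_le (hQ : IsKNice k Q) {a b : ℤ} (ha : 2 * a + 1 ∈ lowerBounds (row Q 2))
    (hb : 2 * b + 1 ∈ upperBounds (row Q 2)) : (row Q 2).encard ≤ (b + 1 - a).toNat := by
  have hsub : row Q 2 ⊆ (fun i ↦ 2 * i + 1) '' Set.Icc a b := by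
    intro x hx
    obtain ⟨i, rfl⟩ := hQ.odd_of_mem_row_two hx
    have hai := ha hx
    have hib := hb hx
    exact ⟨i, ⟨by lia, by lia⟩, rfl⟩
  calc (row Q 2).encard ≤ (Set.Icc a b).encard :=
        (Set.encard_le_encard hsub).trans (Set.encard_image_le _ _)
    _ = (b + 1 - a).toNat := encard_Icc_int a b

lemma encard_row_one_le (hQ : IsKNice k Q) {a b : ℤ} (ha : 2 * a + 1 ∈ row Q 2)
    (hb : 2 * b + 1 ∈ row Q 2) : (row Q 1).encard ≤ (a - b + 2 * ((k + 1) / 2)).toNat := by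
  have hsub : row Q 1 ⊆ Set.Icc (b + 1 - (k + 1) / 2) (a + (k + 1) / 2) := by
    intro x hx
    have hxa := (abs_le.1 (hQ.abs_det_le hx ha)).2
    have hxb := (abs_le.1 (hQ.abs_det_le hx hb)).1
    exact ⟨by lia, by lia⟩
  calc (row Q 1).encard
      ≤ (Set.Icc (b + 1 - ((k : ℤ) + 1) / 2) (a + (k + 1) / 2)).encard :=
        Set.encard_le_encard hsub
    _ = (a - b + 2 * ((k + 1) / 2)).toNat := by
        rw [encard_Icc_int]
        congr 2
        ring

theorem encard_le_of_heightEq_two (hQ : IsKNice k Q) (hy : YNonneg Q) (hh : HeightEq Q 2) :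
    Q.encard ≤ (2 * ((k + 1) / 2) + 2 : ℕ) := by
  have hne : (row Q 2).Nonempty := hy.row_nonempty_of_heightEq hh
  obtain ⟨a', ha⟩ := hQ.exists_isLeast_row two_ne_zero hne
  obtain ⟨b', hb⟩ := hQ.exists_isGreatest_row two_ne_zero hne
  obtain ⟨a, rfl⟩ := hQ.odd_of_mem_row_two ha.1
  obtain ⟨b, rfl⟩ := hQ.odd_of_mem_row_two hb.1
  have hab : 2 * a + 1 ≤ 2 * b + 1 := ha.2 hb.1
  have hspread : 4 * (b - a) ≤ k := by
    linarith [(abs_le.1 (hQ.abs_det_le hb.1 ha.1)).2]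
  calc Q.encard ≤ (row Q 0).encard + (row Q 1).encard + (row Q 2).encard := by
        simpa [Finset.sum_range_succ] using hy.encard_le_sum_encard_row hh.1
    _ ≤ 1 + (a - b + 2 * ((k + 1) / 2)).toNat + (b + 1 - a).toNat := by
        gcongr
        · exact Set.encard_le_one_iff_subsingleton.2 hQ.row_zero_subsingleton
        · exact hQ.encard_row_one_le ha.1 hb.1
        · exact hQ.encard_row_two_le ha.2 hb.2
    _ = (2 * ((k + 1) / 2) + 2 : ℕ) := by
        norm_cast
        lia

end IsKNice

/-- The extremal example of height two: the points `(1, 0)` and `(k, 2)` together with `k + 1`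
consecutive points on the line `y = 1`. -/
def extremalSet (k : ℕ) : Set (ℤ × ℤ) :=
  {(1, 0), ((k : ℤ), 2)} ∪ {p : ℤ × ℤ | 0 ≤ p.1 ∧ p.1 ≤ (k : ℤ) ∧ p.2 = 1}

lemma extremalSet_eq_insert (k : ℕ) :
    extremalSet k = insert (1, 0) (insert ((k : ℤ), 2) ((·, 1) '' Set.Icc (0 : ℤ) k)) := by
  ext ⟨x, y⟩
  simp [extremalSet, or_assoc, and_assoc, eq_comm]

lemma forall_mem_extremalSet {k : ℕ} {P : ℤ × ℤ → Prop} :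
    (∀ p ∈ extremalSet k, P p) ↔ P (1, 0) ∧ P (k, 2) ∧ ∀ x : ℤ, 0 ≤ x → x ≤ k → P (x, 1) := by
  simp only [extremalSet_eq_insert, Set.forall_mem_insert, Set.forall_mem_image, Set.mem_Icc,
    and_imp]

lemma ncard_extremalSet (k : ℕ) : (extremalSet k).ncard = k + 3 := by
  have hencard : (extremalSet k).encard = (k + 3 : ℕ) := by
    rw [extremalSet_eq_insert, Set.encard_insert_of_notMem (by simp),
      Set.encard_insert_of_notMem (by simp), (Prod.mk_left_injective 1).encard_image,
      encard_Icc_int, sub_zero]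
    norm_cast
  rw [Set.ncard, hencard, ENat.toNat_natCast]

lemma yNonneg_extremalSet (k : ℕ) : YNonneg (extremalSet k) :=
  forall_mem_extremalSet.2 ⟨by simp, by simp, by simp⟩

lemma heightEq_extremalSet_two (k : ℕ) : HeightEq (extremalSet k) 2 :=
  ⟨forall_mem_extremalSet.2 ⟨by simp, by simp, by simp⟩, (k, 2), Or.inl (Or.inr rfl), rfl⟩

lemma neg_notMem_extremalSet (k : ℕ) : ∀ p ∈ extremalSet k, -p ∉ extremalSet k := by
  refine forall_mem_extremalSet.2 ⟨?_, ?_, fun x _ _ ↦ ?_⟩ <;> simp [extremalSet]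

lemma abs_det_le_of_mem_extremalSet {k : ℕ} (hk : 2 ≤ k) {p q : ℤ × ℤ}
    (hp : p ∈ extremalSet k) (hq : q ∈ extremalSet k) : |p.1 * q.2 - q.1 * p.2| ≤ k := by
  rcases hp with (rfl | rfl) | ⟨hp0, hpk, hp1⟩ <;> rcases hq with (rfl | rfl) | ⟨hq0, hqk, hq1⟩ <;>
    simp only [abs_le, *] <;> lia

lemma isKNice_extremalSet {k : ℕ} (hk : 2 ≤ k) (hodd : Odd k) : IsKNice k (extremalSet k) := by
  have hgcd : Int.gcd k 2 = 1 := Nat.coprime_two_right.2 hodd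
  exact ⟨forall_mem_extremalSet.2 ⟨by simp, by simp [hgcd], by simp⟩,
    neg_notMem_extremalSet k, fun _ hp _ hq ↦ abs_det_le_of_mem_extremalSet hk hp hq⟩

theorem kNice_height_two (k : ℕ) (hk : 3 ≤ k) :
    (∀ Q : Set (ℤ × ℤ), IsKNice k Q → YNonneg Q → HeightEq Q 2 →
      Q.Finite ∧ Q.ncard ≤ k + 3) ∧
    (k % 2 = 0 → ∀ Q : Set (ℤ × ℤ), IsKNice k Q → YNonneg Q → HeightEq Q 2 →
      Q.Finite ∧ Q.ncard ≤ k + 2) ∧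
    (k % 2 = 1 →
      IsKNice k ({((1 : ℤ), (0 : ℤ)), ((k : ℤ), (2 : ℤ))} ∪
        {p : ℤ × ℤ | 0 ≤ p.1 ∧ p.1 ≤ (k : ℤ) ∧ p.2 = 1}) ∧
      YNonneg ({((1 : ℤ), (0 : ℤ)), ((k : ℤ), (2 : ℤ))} ∪
        {p : ℤ × ℤ | 0 ≤ p.1 ∧ p.1 ≤ (k : ℤ) ∧ p.2 = 1}) ∧
      HeightEq ({((1 : ℤ), (0 : ℤ)), ((k : ℤ), (2 : ℤ))} ∪
        {p : ℤ × ℤ | 0 ≤ p.1 ∧ p.1 ≤ (k : ℤ) ∧ p.2 = 1}) 2 ∧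
      ({((1 : ℤ), (0 : ℤ)), ((k : ℤ), (2 : ℤ))} ∪
        {p : ℤ × ℤ | 0 ≤ p.1 ∧ p.1 ≤ (k : ℤ) ∧ p.2 = 1}).ncard = k + 3) := by
  have hupper (Q : Set (ℤ × ℤ)) (hQ : IsKNice k Q) (hy : YNonneg Q) (hh : HeightEq Q 2) :
      Q.Finite ∧ Q.ncard ≤ 2 * ((k + 1) / 2) + 2 :=
    Set.encard_le_coe_iff_finite_ncard_le.1 (hQ.encard_le_of_heightEq_two hy hh)
  refine ⟨fun Q hQ hy hh ↦ ?_, fun heven Q hQ hy hh ↦ ?_, fun hodd ↦ ?_⟩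
  · exact (hupper Q hQ hy hh).imp_right fun hcard ↦ by lia
  · exact (hupper Q hQ hy hh).imp_right fun hcard ↦ by lia
  · exact ⟨isKNice_extremalSet (by lia) (Nat.odd_iff.2 hodd), yNonneg_extremalSet k,
      heightEq_extremalSet_two k, ncard_extremalSet k⟩
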